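/- For every fixed ε > 0 there is a constant C(ε) such that, with the notation of the context, N₀(B) ≤ C(ε) · (Y₁Y₂Y₃ + (X₁X₂X₃)^{1/3}) · B^ε; consequently N₀(B) ≤ C(ε) · (Y₁Y₂Y₃ + B^{1/2}) · B^ε. The constant is uniform in a₁, a₂, a₃ and in the parameters X_i, Y_i. -/

import Mathlib

/-- The set `S₀(B)` of sextuples `(x₁, x₂, x₃, y₁, y₂, y₃)` of positive integers (encoded as a
pair of functions `Fin 3 → ℤ`) such that `Xᵢ/2 < xᵢ ≤ Xᵢ` and `Yᵢ/2 < yᵢ ≤ Yᵢ`, the equation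
`a₁x₁²y₁³ + a₂x₂²y₂³ + a₃x₃²y₃³ = 0` holds, `gcd(x₁y₁, x₂y₂, x₃y₃) = 1`,
`gcd(a₁a₂a₃, x₁x₂x₃y₁y₂y₃) = 1`, and `a₁y₁, a₂y₂, a₃y₃` are all squarefree. -/
def S0 (a : Fin 3 → ℤ) (X Y : Fin 3 → ℝ) : Set ((Fin 3 → ℤ) × (Fin 3 → ℤ)) :=
  {p | (∀ i, 0 < p.1 i) ∧ (∀ i, 0 < p.2 i) ∧
    (∀ i, X i / 2 < (p.1 i : ℝ) ∧ (p.1 i : ℝ) ≤ X i) ∧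
    (∀ i, Y i / 2 < (p.2 i : ℝ) ∧ (p.2 i : ℝ) ≤ Y i) ∧
    a 0 * p.1 0 ^ 2 * p.2 0 ^ 3 + a 1 * p.1 1 ^ 2 * p.2 1 ^ 3 +
      a 2 * p.1 2 ^ 2 * p.2 2 ^ 3 = 0 ∧
    Int.gcd (p.1 0 * p.2 0) (Int.gcd (p.1 1 * p.2 1) (p.1 2 * p.2 2)) = 1 ∧
    Int.gcd (a 0 * a 1 * a 2) (p.1 0 * p.1 1 * p.1 2 * p.2 0 * p.2 1 * p.2 2) = 1 ∧
    (∀ i, Squarefree (a i * p.2 i))}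


/-- The divisor bound `τ(n) ≪ n^ε`. -/
lemma divisor_bound (ε : ℝ) (hε : 0 < ε) :
    ∃ C : ℝ, 1 ≤ C ∧ ∀ n : ℕ, n ≠ 0 → ((n.divisors.card : ℕ) : ℝ) ≤ C * (n : ℝ) ^ ε := by
  set L : ℝ := ε * Real.log 2 with hL
  have hLpos : 0 < L := mul_pos hε (Real.log_pos (by norm_num))
  set K : ℝ := max 1 (1 / L) with hK
  have hK1 : 1 ≤ K := le_max_left _ _
  have hKL : 1 ≤ K * L := by
    have : 1 / L ≤ K := le_max_right _ _
    rwa [div_le_iff₀ hLpos] at this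
  obtain ⟨P, hP⟩ := exists_nat_ge ((2 : ℝ) ^ (1 / ε))
  refine ⟨K ^ P, one_le_pow₀ hK1, fun n hn => ?_⟩
  rw [Nat.card_divisors hn]
  have hnprod : (n : ℝ) ^ ε = ∏ p ∈ n.primeFactors, ((p : ℝ) ^ (n.factorization p)) ^ ε := by
    rw [Real.finsetProd_rpow _ _ (fun i _ => by positivity)]
    congr 1
    conv_lhs => rw [← Nat.prod_factorization_pow_eq_self hn]
    simp [Finsupp.prod]
  have hterm : ∀ p ∈ n.primeFactors, ((n.factorization p + 1 : ℕ) : ℝ) ≤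
      (if p < P then K else 1) * ((p : ℝ) ^ (n.factorization p)) ^ ε := by
    intro p hp
    have hp2 : (2 : ℝ) ≤ p := by exact_mod_cast (Nat.prime_of_mem_primeFactors hp).two_le
    set v := n.factorization p
    have hpow : ((p : ℝ) ^ v) ^ ε = ((p : ℝ) ^ ε) ^ v := by
      rw [← Real.rpow_natCast, ← Real.rpow_mul (by positivity), mul_comm, Real.rpow_mul (by positivity),
        Real.rpow_natCast]
    rw [hpow]
    split_ifs with h
    · have h1 : 1 + L ≤ (p : ℝ) ^ ε := by
        calc 1 + L ≤ Real.exp L := by linarith [Real.add_one_le_exp L]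
          _ = (2 : ℝ) ^ ε := by rw [Real.rpow_def_of_pos (by norm_num), hL, mul_comm]
          _ ≤ _ := Real.rpow_le_rpow (by norm_num) hp2 hε.le
      have h2 : 1 + (v : ℝ) * L ≤ ((p : ℝ) ^ ε) ^ v :=
        (one_add_mul_le_pow (by linarith) v).trans (pow_le_pow_left₀ (by linarith) h1 v)
      have h3 : K * (1 + (v : ℝ) * L) ≤ K * ((p : ℝ) ^ ε) ^ v :=
        mul_le_mul_of_nonneg_left h2 (by linarith)
      have h4 : (v : ℝ) * 1 ≤ v * (K * L) := mul_le_mul_of_nonneg_left hKL (by positivity)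
      push_cast
      nlinarith
    · have hPp : (P : ℝ) ≤ p := by exact_mod_cast not_lt.mp h
      have h1 : (2 : ℝ) ≤ (p : ℝ) ^ ε := by
        calc (2 : ℝ) = ((2 : ℝ) ^ (1 / ε)) ^ ε := by
              rw [← Real.rpow_mul (by norm_num)]; field_simp; simp
          _ ≤ _ := Real.rpow_le_rpow (by positivity) (hP.trans hPp) hε.le
      have h2 : ((2 : ℝ)) ^ v ≤ ((p : ℝ) ^ ε) ^ v := pow_le_pow_left₀ (by norm_num) h1 v
      have h3 : ((v + 1 : ℕ) : ℝ) ≤ (2 : ℝ) ^ v := by exact_mod_cast Nat.lt_two_pow_self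
      linarith
  rw [Nat.cast_prod, hnprod]
  refine (Finset.prod_le_prod (fun _ _ => by positivity) hterm).trans ?_
  rw [Finset.prod_mul_distrib]
  refine mul_le_mul_of_nonneg_right ?_ (Finset.prod_nonneg fun _ _ => by positivity)
  rw [Finset.prod_ite]
  simp only [Finset.prod_const, one_pow, mul_one]
  refine pow_le_pow_right₀ hK1 ?_
  calc _ ≤ (Finset.range P).card := Finset.card_le_card (fun x hx => by
        simp at hx ⊢; exact hx.2)
    _ = P := by simp

lemma pair_dvd (c g2 g3 x2 x3 y2 y3 b2 b3 : ℤ) (hc : c ≠ 0)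
    (hg : IsCoprime c g2) (hx2 : IsCoprime c x2) (hy2 : IsCoprime c y2) (hb3 : IsCoprime c b3)
    (hx : c ∣ g2 * x2 ^ 2 + g3 * x3 ^ 2) (hy : c ∣ g2 * y2 ^ 2 + g3 * y3 ^ 2)
    (hb : c ∣ g2 * b2 ^ 2 + g3 * b3 ^ 2)
    (hd : Int.gcd (x2 * b3 - x3 * b2) c = Int.gcd (y2 * b3 - y3 * b2) c) :
    c ∣ 2 * (x2 * y3 - x3 * y2) := by
  have key : ∀ z2 z3 : ℤ, c ∣ g2 * z2 ^ 2 + g3 * z3 ^ 2 →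
      c ∣ (z2 * b3 - z3 * b2) * (z2 * b3 + z3 * b2) := by
    intro z2 z3 hz
    refine hg.dvd_of_dvd_mul_left ?_
    have : g2 * ((z2 * b3 - z3 * b2) * (z2 * b3 + z3 * b2)) =
      b3 ^ 2 * (g2 * z2 ^ 2 + g3 * z3 ^ 2) - z3 ^ 2 * (g2 * b2 ^ 2 + g3 * b3 ^ 2) := by ring
    rw [this]
    exact dvd_sub (hz.mul_left _) (hb.mul_left _)
  set d : ℤ := (Int.gcd (x2 * b3 - x3 * b2) c : ℤ) with hdd
  have hd0 : d ≠ 0 := by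
    rw [hdd]; simp [Int.gcd_eq_zero_iff, hc]
  obtain ⟨e, he⟩ : d ∣ c := Int.gcd_dvd_right _ _
  have he' : ∀ z2 z3 : ℤ, c ∣ g2 * z2 ^ 2 + g3 * z3 ^ 2 →
      (Int.gcd (z2 * b3 - z3 * b2) c : ℤ) = d → e ∣ z2 * b3 + z3 * b2 := by
    intro z2 z3 hz hgz
    obtain ⟨w, hw⟩ : d ∣ z2 * b3 - z3 * b2 := hgz ▸ Int.gcd_dvd_left _ _
    have h1 := key z2 z3 hz
    rw [hw, he, mul_assoc] at h1
    have h2 := Int.dvd_of_mul_dvd_mul_left hd0 h1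
    have hcop : IsCoprime e w := by
      rw [Int.isCoprime_iff_gcd_eq_one]
      have h3 : (Int.gcd (d * w) (d * e) : ℤ) = d := by rw [← hw, ← he]; exact hgz
      rw [Int.gcd_mul_left] at h3
      have h4 : d.natAbs * Int.gcd w e = d.natAbs := by
        have := congrArg Int.natAbs h3
        simpa [Int.natAbs_mul, Int.natAbs_abs] using this
      rw [Int.gcd_comm]
      exact Nat.eq_of_mul_eq_mul_left (Int.natAbs_pos.mpr hd0) (by simpa using h4)
    exact hcop.dvd_of_dvd_mul_left h2
  have hdx : d ∣ x2 * b3 - x3 * b2 := Int.gcd_dvd_left _ _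
  have hdy : d ∣ y2 * b3 - y3 * b2 := by rw [hdd, hd]; exact Int.gcd_dvd_left _ _
  have hex := he' x2 x3 hx rfl
  have hey := he' y2 y3 hy (by rw [hdd, hd])
  have hdc : d ∣ c := ⟨e, he⟩
  have hec : e ∣ c := ⟨d, by rw [he, mul_comm]⟩
  have hdW : d ∣ x2 * y3 - x3 * y2 := by
    refine (hb3.of_isCoprime_of_dvd_left hdc).dvd_of_dvd_mul_left ?_
    have : b3 * (x2 * y3 - x3 * y2) = y3 * (x2 * b3 - x3 * b2) - x3 * (y2 * b3 - y3 * b2) := by ring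
    rw [this]
    exact dvd_sub (hdx.mul_left _) (hdy.mul_left _)
  have heW : e ∣ x2 * y3 - x3 * y2 := by
    refine (hb3.of_isCoprime_of_dvd_left hec).dvd_of_dvd_mul_left ?_
    have : b3 * (x2 * y3 - x3 * y2) = y3 * (x2 * b3 + x3 * b2) - x3 * (y2 * b3 + y3 * b2) := by ring
    rw [this]
    exact dvd_sub (hex.mul_left _) (hey.mul_left _)
  have hg2 : (Int.gcd d e : ℤ) ∣ 2 := by
    have hgd : (Int.gcd d e : ℤ) ∣ d := Int.gcd_dvd_left _ _
    have hge : (Int.gcd d e : ℤ) ∣ e := Int.gcd_dvd_right _ _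
    refine (hx2.of_isCoprime_of_dvd_left (hgd.trans hdc)).dvd_of_dvd_mul_right ?_
    refine (hb3.of_isCoprime_of_dvd_left (hgd.trans hdc)).dvd_of_dvd_mul_right ?_
    have : 2 * x2 * b3 = (x2 * b3 - x3 * b2) + (x2 * b3 + x3 * b2) := by ring
    rw [this]
    exact dvd_add (hgd.trans hdx) (hge.trans hex)
  obtain ⟨k, hk⟩ := hg2
  have hbez := Int.gcd_eq_gcd_ab d e
  obtain ⟨p, hp⟩ := hdW
  obtain ⟨q, hq⟩ := heW
  refine ⟨k * (Int.gcdA d e * q + Int.gcdB d e * p), ?_⟩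
  rw [hk, hbez, he]
  calc _ = k * (d * Int.gcdA d e * (x2 * y3 - x3 * y2) + e * Int.gcdB d e * (x2 * y3 - x3 * y2)) := by ring
    _ = k * (d * Int.gcdA d e * (e * q) + e * Int.gcdB d e * (d * p)) := by rw [← hq, ← hp]
    _ = _ := by ring

/-- Three affine points on a conic arc span a small triangle. -/
lemma det_bound (k m u1 u2 u3 v1 v2 v3 U V δ : ℝ) (hU : 0 < U) (hV : 0 < V)
    (h1 : k * u1 ^ 2 + v1 ^ 2 = m) (h2 : k * u2 ^ 2 + v2 ^ 2 = m) (h3 : k * u3 ^ 2 + v3 ^ 2 = m)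
    (hu1 : 0 < u1 ∧ u1 ≤ 2 * U) (hu2 : 0 < u2 ∧ u2 ≤ 2 * U) (hu3 : 0 < u3 ∧ u3 ≤ 2 * U)
    (hv1 : V / 2 ≤ v1 ∧ v1 ≤ 2 * V) (hv2 : V / 2 ≤ v2 ∧ v2 ≤ 2 * V) (hv3 : V / 2 ≤ v3 ∧ v3 ≤ 2 * V)
    (hk : |k| * U ^ 2 ≤ V ^ 2)
    (h12 : |u2 - u1| ≤ δ * U) (h13 : |u3 - u1| ≤ δ * U) (h23 : |u3 - u2| ≤ δ * U) (hδ : 0 ≤ δ) :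
    |(u2 - u1) * (v3 - v1) - (u3 - u1) * (v2 - v1)| ≤ 32 * (U * V) * δ ^ 3 := by
  set D := (u2 - u1) * (v3 - v1) - (u3 - u1) * (v2 - v1) with hD
  have id1 : D * ((v3 + v1) * (v2 + v1) * (v3 + v2)) =
      -k * ((u2 - u1) * (u3 - u1) * (u3 - u2)) *
        ((v2 + v1) * (v3 + v2) + k * (u2 + u1) * (u3 + u2)) := by
    have e12 : (v2 - v1) * (v2 + v1) = -k * (u2 - u1) * (u2 + u1) := by linear_combination h2 - h1
    have e13 : (v3 - v1) * (v3 + v1) = -k * (u3 - u1) * (u3 + u1) := by linear_combination h3 - h1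
    have e23 : (v3 - v2) * (v3 + v2) = -k * (u3 - u2) * (u3 + u2) := by linear_combination h3 - h2
    rw [hD]
    linear_combination (u2 - u1) * (v2 + v1) * (v3 + v2) * e13
      - (u3 - u1) * (v3 + v1) * (v3 + v2) * e12
      + k * (u2 - u1) * (u3 - u1) * (u2 + u1) * e23
  have p1 : 0 < v1 := by linarith
  have p2 : 0 < v2 := by linarith
  have p3 : 0 < v3 := by linarith
  have hden : V ^ 3 ≤ (v3 + v1) * (v2 + v1) * (v3 + v2) := by
    calc V ^ 3 = V * V * V := by ring
      _ ≤ _ := by gcongr <;> linarith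
  have hdiff : |(u2 - u1) * (u3 - u1) * (u3 - u2)| ≤ (δ * U) ^ 3 := by
    rw [abs_mul, abs_mul]
    calc _ ≤ (δ * U) * (δ * U) * (δ * U) := by gcongr
      _ = _ := by ring
  have hbr : |(v2 + v1) * (v3 + v2) + k * (u2 + u1) * (u3 + u2)| ≤ 32 * V ^ 2 := by
    refine (abs_add_le _ _).trans ?_
    have t1 : |(v2 + v1) * (v3 + v2)| ≤ 16 * V ^ 2 := by
      rw [abs_of_nonneg (by apply mul_nonneg <;> linarith)]
      calc _ ≤ (4 * V) * (4 * V) := by gcongr <;> linarith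
        _ = _ := by ring
    have t2 : |k * (u2 + u1) * (u3 + u2)| ≤ 16 * V ^ 2 := by
      rw [abs_mul, abs_mul, abs_of_nonneg (by linarith : 0 ≤ u2 + u1),
        abs_of_nonneg (by linarith : 0 ≤ u3 + u2)]
      calc _ ≤ |k| * (4 * U) * (4 * U) := by gcongr <;> linarith
        _ = 16 * (|k| * U ^ 2) := by ring
        _ ≤ _ := by linarith
    linarith
  have hfin : |D| * V ^ 3 ≤ (32 * (U * V) * δ ^ 3) * V ^ 3 := by
    calc |D| * V ^ 3 ≤ |D| * ((v3 + v1) * (v2 + v1) * (v3 + v2)) := by gcongr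
      _ = |D * ((v3 + v1) * (v2 + v1) * (v3 + v2))| := by
        rw [abs_mul, abs_of_nonneg ((by positivity : (0:ℝ) ≤ V ^ 3).trans hden)]
      _ = |k| * |(u2 - u1) * (u3 - u1) * (u3 - u2)| *
          |(v2 + v1) * (v3 + v2) + k * (u2 + u1) * (u3 + u2)| := by
        rw [id1, abs_mul, abs_mul, abs_neg]
      _ ≤ |k| * (δ * U) ^ 3 * (32 * V ^ 2) := by gcongr
      _ = (|k| * U ^ 2) * (32 * δ ^ 3 * U * V ^ 2) := by ring
      _ ≤ V ^ 2 * (32 * δ ^ 3 * U * V ^ 2) := by gcongr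
      _ = _ := by ring
  exact le_of_mul_le_mul_right hfin (by positivity)

/-- Three collinear points on a smooth diagonal conic: two coincide. -/
lemma collinear_eq (k m u1 u2 u3 v1 v2 v3 : ℝ) (hm : m ≠ 0) (hk0 : k ≠ 0)
    (h1 : k * u1 ^ 2 + v1 ^ 2 = m) (h2 : k * u2 ^ 2 + v2 ^ 2 = m) (h3 : k * u3 ^ 2 + v3 ^ 2 = m)
    (hD : (u2 - u1) * (v3 - v1) - (u3 - u1) * (v2 - v1) = 0) :
    u1 = u2 ∨ u1 = u3 ∨ u2 = u3 := by
  by_contra! hne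
  obtain ⟨n12, n13, n23⟩ := hne
  have d12 : u2 - u1 ≠ 0 := sub_ne_zero.mpr n12.symm
  have d13 : u3 - u1 ≠ 0 := sub_ne_zero.mpr n13.symm
  obtain ⟨s, hs⟩ : ∃ s, v2 - v1 = s * (u2 - u1) := ⟨(v2 - v1) / (u2 - u1), by field_simp⟩
  have hs3 : v3 - v1 = s * (u3 - u1) := by
    have : (u2 - u1) * (v3 - v1 - s * (u3 - u1)) = 0 := by rw [hs] at hD; linear_combination hD
    rcases mul_eq_zero.mp this with h | h
    · exact absurd h d12
    · linarith
  have f2 : (u2 - u1) * ((k + s ^ 2) * (u2 - u1) + 2 * (k * u1 + s * v1)) = 0 := by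
    have : v2 = v1 + s * (u2 - u1) := by linarith
    rw [this] at h2; linear_combination h2 - h1
  have f3 : (u3 - u1) * ((k + s ^ 2) * (u3 - u1) + 2 * (k * u1 + s * v1)) = 0 := by
    have : v3 = v1 + s * (u3 - u1) := by linarith
    rw [this] at h3; linear_combination h3 - h1
  have g2 := (mul_eq_zero.mp f2).resolve_left d12
  have g3 := (mul_eq_zero.mp f3).resolve_left d13
  have hk : k + s ^ 2 = 0 := by
    have : (k + s ^ 2) * (u3 - u2) = 0 := by linear_combination g3 - g2
    exact (mul_eq_zero.mp this).resolve_right (sub_ne_zero.mpr n23.symm)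
  have hl : s * (v1 - s * u1) = 0 := by
    rw [hk] at g2
    linear_combination g2 / 2 - u1 * hk
  apply hm
  rcases mul_eq_zero.mp hl with h | h
  · exact absurd (by rw [h] at hk; linarith) hk0
  · rw [← h1]; linear_combination (v1 + s * u1) * h + u1 ^ 2 * hk

lemma det_affine (x0 x1 x2 y0 y1 y2 z0 z1 z2 : ℝ) (hx : x2 ≠ 0) (hy : y2 ≠ 0) (hz : z2 ≠ 0) :
    x0 * (y1 * z2 - y2 * z1) - x1 * (y0 * z2 - y2 * z0) + x2 * (y0 * z1 - y1 * z0) =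
    (x2 * y2 * z2) * ((y0 / y2 - x0 / x2) * (z1 / z2 - x1 / x2) -
      (z0 / z2 - x0 / x2) * (y1 / y2 - x1 / x2)) := by
  field_simp
  ring

lemma affine_eq (c0 c1 c2 x0 x1 x2 : ℝ) (h1 : c1 ≠ 0) (hx : x2 ≠ 0)
    (h : c0 * x0 ^ 2 + c1 * x1 ^ 2 + c2 * x2 ^ 2 = 0) :
    c0 / c1 * (x0 / x2) ^ 2 + (x1 / x2) ^ 2 = - c2 / c1 := by
  field_simp
  linear_combination h

lemma ratio_bd (x0 x2 X0 X2 : ℝ) (hX0 : 0 < X0) (hX2 : 0 < X2)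
    (h0 : X0 / 2 < x0 ∧ x0 ≤ X0) (h2 : X2 / 2 < x2 ∧ x2 ≤ X2) :
    X0 / X2 / 2 ≤ x0 / x2 ∧ x0 / x2 < 2 * (X0 / X2) := by
  have : 0 < x2 := by linarith
  constructor
  · rw [div_div, div_le_div_iff₀ (by positivity) this]
    nlinarith
  · rw [← mul_div_assoc, div_lt_div_iff₀ this hX2]
    nlinarith

set_option maxHeartbeats 1000000 in
/-- Three points of the conic whose first affine coordinates fall in the same short interval,
and whose determinant is divisible by a large number: two of the affine coordinates coincide. -/
lemma triple_real (c0 c1 c2 x0 x1 x2 y0 y1 y2 z0 z1 z2 X0 X1 X2 δ N : ℝ)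
    (hc0 : c0 ≠ 0) (hc1 : c1 ≠ 0) (hc2 : c2 ≠ 0)
    (hX0 : 0 < X0) (hX1 : 0 < X1) (hX2 : 0 < X2)
    (hx0 : X0 / 2 < x0 ∧ x0 ≤ X0) (hx1 : X1 / 2 < x1 ∧ x1 ≤ X1) (hx2 : X2 / 2 < x2 ∧ x2 ≤ X2)
    (hy0 : X0 / 2 < y0 ∧ y0 ≤ X0) (hy1 : X1 / 2 < y1 ∧ y1 ≤ X1) (hy2 : X2 / 2 < y2 ∧ y2 ≤ X2)
    (hz0 : X0 / 2 < z0 ∧ z0 ≤ X0) (hz1 : X1 / 2 < z1 ∧ z1 ≤ X1) (hz2 : X2 / 2 < z2 ∧ z2 ≤ X2)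
    (ex : c0 * x0 ^ 2 + c1 * x1 ^ 2 + c2 * x2 ^ 2 = 0)
    (ey : c0 * y0 ^ 2 + c1 * y1 ^ 2 + c2 * y2 ^ 2 = 0)
    (ez : c0 * z0 ^ 2 + c1 * z1 ^ 2 + c2 * z2 ^ 2 = 0)
    (hmax : |c0| * X0 ^ 2 ≤ |c1| * X1 ^ 2) (hδ : 0 ≤ δ)
    (hxy : |y0 / y2 - x0 / x2| ≤ δ * (X0 / X2)) (hxz : |z0 / z2 - x0 / x2| ≤ δ * (X0 / X2))
    (hyz : |z0 / z2 - y0 / y2| ≤ δ * (X0 / X2))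
    (hN : 32 * (X0 * X1 * X2) * δ ^ 3 < N)
    (hdet : |x0 * (y1 * z2 - y2 * z1) - x1 * (y0 * z2 - y2 * z0) + x2 * (y0 * z1 - y1 * z0)| < N →
      x0 * (y1 * z2 - y2 * z1) - x1 * (y0 * z2 - y2 * z0) + x2 * (y0 * z1 - y1 * z0) = 0) :
    (x0 / x2 = y0 / y2 ∧ x1 / x2 = y1 / y2) ∨ (x0 / x2 = z0 / z2 ∧ x1 / x2 = z1 / z2) ∨
      (y0 / y2 = z0 / z2 ∧ y1 / y2 = z1 / z2) := by
  have px : 0 < x2 := by linarith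
  have py : 0 < y2 := by linarith
  have pz : 0 < z2 := by linarith
  have ax := affine_eq c0 c1 c2 x0 x1 x2 hc1 px.ne' ex
  have ay := affine_eq c0 c1 c2 y0 y1 y2 hc1 py.ne' ey
  have az := affine_eq c0 c1 c2 z0 z1 z2 hc1 pz.ne' ez
  have bx0 := ratio_bd x0 x2 X0 X2 hX0 hX2 hx0 hx2
  have by0 := ratio_bd y0 y2 X0 X2 hX0 hX2 hy0 hy2
  have bz0 := ratio_bd z0 z2 X0 X2 hX0 hX2 hz0 hz2
  have bx1 := ratio_bd x1 x2 X1 X2 hX1 hX2 hx1 hx2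
  have by1 := ratio_bd y1 y2 X1 X2 hX1 hX2 hy1 hy2
  have bz1 := ratio_bd z1 z2 X1 X2 hX1 hX2 hz1 hz2
  rw [det_affine _ _ _ _ _ _ _ _ _ px.ne' py.ne' pz.ne'] at hdet
  have hU : 0 < X0 / X2 := by positivity
  have hV : 0 < X1 / X2 := by positivity
  have hk : |c0 / c1| * (X0 / X2) ^ 2 ≤ (X1 / X2) ^ 2 := by
    have : 0 < |c1| := abs_pos.mpr hc1
    rw [abs_div, div_pow, div_pow, div_mul_div_comm, div_le_div_iff₀ (by positivity) (by positivity)]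
    nlinarith [sq_nonneg X2]
  have hD := det_bound (c0 / c1) (-c2 / c1) (x0 / x2) (y0 / y2) (z0 / z2) (x1 / x2) (y1 / y2)
    (z1 / z2) (X0 / X2) (X1 / X2) δ hU hV ax ay az ⟨by linarith, bx0.2.le⟩ ⟨by linarith, by0.2.le⟩
    ⟨by linarith, bz0.2.le⟩ ⟨bx1.1, bx1.2.le⟩ ⟨by1.1, by1.2.le⟩ ⟨bz1.1, bz1.2.le⟩ hk hxy hxz hyz hδ
  have h0 := hdet (lt_of_le_of_lt (by
    rw [abs_mul, abs_of_pos (by positivity)]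
    calc _ ≤ (X2 * X2 * X2) * (32 * (X0 / X2 * (X1 / X2)) * δ ^ 3) := by
          gcongr
          exacts [hx2.2, hy2.2, hz2.2]
      _ = 32 * (X0 * X1 * X2) * δ ^ 3 := by field_simp) hN)
  have h1 := (mul_eq_zero.mp h0).resolve_left (by positivity)
  have pos : ∀ s t : ℝ, 0 < s → 0 < t → ∀ p q : ℝ, p = q → c0 / c1 * p ^ 2 + s ^ 2 = -c2 / c1 →
      c0 / c1 * q ^ 2 + t ^ 2 = -c2 / c1 → s = t := by
    intro s t hs ht p q hpq h1 h2
    subst hpq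
    have : s ^ 2 = t ^ 2 := by linarith
    exact (pow_left_inj₀ hs.le ht.le two_ne_zero).mp this
  have qx : 0 < x1 / x2 := by linarith
  have qy : 0 < y1 / y2 := by linarith
  have qz : 0 < z1 / z2 := by linarith
  rcases collinear_eq _ _ _ _ _ _ _ _ (div_ne_zero (neg_ne_zero.mpr hc2) hc1)
    (div_ne_zero hc0 hc1) ax ay az h1 with h | h | h
  · exact Or.inl ⟨h, pos _ _ qx qy _ _ h ax ay⟩
  · exact Or.inr (Or.inl ⟨h, pos _ _ qx qz _ _ h ax az⟩)
  · exact Or.inr (Or.inr ⟨h, pos _ _ qy qz _ _ h ay az⟩)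

/-- The conditions on a point of a diagonal conic in a dyadic box. -/
def OnConic (c : Fin 3 → ℤ) (X : Fin 3 → ℝ) (x : Fin 3 → ℤ) : Prop :=
  (∀ i, 0 < x i) ∧ (∀ i, X i / 2 < (x i : ℝ) ∧ (x i : ℝ) ≤ X i) ∧
    c 0 * x 0 ^ 2 + c 1 * x 1 ^ 2 + c 2 * x 2 ^ 2 = 0 ∧
    ∀ i j, i ≠ j → IsCoprime (c i * x i ^ 2) (c j * x j ^ 2)

lemma OnConic.cc {c X x} (h : OnConic c X x) {i j : Fin 3} (hij : i ≠ j) : IsCoprime (c i) (c j) :=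
  (h.2.2.2 i j hij).of_mul_left_left.of_mul_right_left

lemma OnConic.cx {c X x} (h : OnConic c X x) {i j : Fin 3} (hij : i ≠ j) : IsCoprime (c i) (x j) := by
  have := (h.2.2.2 i j hij).of_mul_left_left.of_mul_right_right
  rwa [IsCoprime.pow_right_iff (by norm_num)] at this

lemma OnConic.xx {c X x} (h : OnConic c X x) {i j : Fin 3} (hij : i ≠ j) : IsCoprime (x i) (x j) := by
  have := (h.2.2.2 i j hij).of_mul_left_right.of_mul_right_right
  rwa [IsCoprime.pow_iff (by norm_num) (by norm_num)] at this

lemma OnConic.eq_of_ratio {c X x y} (hx : OnConic c X x) (hy : OnConic c X y)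
    (h0 : (x 0 : ℝ) / x 2 = y 0 / y 2) (h1 : (x 1 : ℝ) / x 2 = y 1 / y 2) : x = y := by
  have px : (x 2 : ℝ) ≠ 0 := by exact_mod_cast (hx.1 2).ne'
  have py : (y 2 : ℝ) ≠ 0 := by exact_mod_cast (hy.1 2).ne'
  rw [div_eq_div_iff px py] at h0 h1
  have h0' : x 0 * y 2 = y 0 * x 2 := by exact_mod_cast h0
  have h1' : x 1 * y 2 = y 1 * x 2 := by exact_mod_cast h1
  have h2 : x 2 = y 2 := by
    apply Int.dvd_antisymm (hx.1 2).le (hy.1 2).le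
    · exact (hx.xx (by decide : (2 : Fin 3) ≠ 0)).dvd_of_dvd_mul_left ⟨y 0, by rw [h0', mul_comm]⟩
    · exact (hy.xx (by decide : (2 : Fin 3) ≠ 0)).dvd_of_dvd_mul_left ⟨x 0, by rw [← h0', mul_comm]⟩
  have hy2 : y 2 ≠ 0 := (hy.1 2).ne'
  rw [h2] at h0' h1'
  funext i
  fin_cases i
  · exact mul_right_cancel₀ hy2 h0'
  · exact mul_right_cancel₀ hy2 h1'
  · exact h2

/-- The integer determinant. -/
def idet (x y z : Fin 3 → ℤ) : ℤ :=
  x 0 * (y 1 * z 2 - y 2 * z 1) - x 1 * (y 0 * z 2 - y 2 * z 0) + x 2 * (y 0 * z 1 - y 1 * z 0)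

/-- The congruence key of a point relative to a base point. -/
def ckey (c b x : Fin 3 → ℤ) (i j k : Fin 3) : ℕ := Int.gcd (x j * b k - x k * b j) (c i)

lemma ckey_pair {c X x y b} (hc : ∀ i, c i ≠ 0) (hx : OnConic c X x) (hy : OnConic c X y)
    (hb : OnConic c X b) {i j k : Fin 3} (hij : i ≠ j) (hik : i ≠ k)
    (hs : ∀ w : Fin 3 → ℤ, c 0 * w 0 ^ 2 + c 1 * w 1 ^ 2 + c 2 * w 2 ^ 2 = 0 →
      c i ∣ c j * w j ^ 2 + c k * w k ^ 2)
    (h : ckey c b x i j k = ckey c b y i j k) : c i ∣ 2 * (x j * y k - x k * y j) :=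
  pair_dvd (c i) (c j) (c k) _ _ _ _ (b j) (b k) (hc i) (hx.cc hij) (hx.cx hij) (hy.cx hij)
    (hb.cx hik) (hs x hx.2.2.1) (hs y hy.2.2.1) (hs b hb.2.2.1) h

lemma idet_dvd {c X x y z b} (hc : ∀ i, c i ≠ 0) (hx : OnConic c X x) (hy : OnConic c X y)
    (hz : OnConic c X z) (hb : OnConic c X b)
    (hxy0 : ckey c b x 0 1 2 = ckey c b y 0 1 2) (hxz0 : ckey c b x 0 1 2 = ckey c b z 0 1 2)
    (hxy1 : ckey c b x 1 2 0 = ckey c b y 1 2 0) (hxz1 : ckey c b x 1 2 0 = ckey c b z 1 2 0)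
    (hxy2 : ckey c b x 2 0 1 = ckey c b y 2 0 1) (hxz2 : ckey c b x 2 0 1 = ckey c b z 2 0 1) :
    c 0 * c 1 * c 2 ∣ 2 * idet x y z := by
  have s0 : ∀ w : Fin 3 → ℤ, c 0 * w 0 ^ 2 + c 1 * w 1 ^ 2 + c 2 * w 2 ^ 2 = 0 →
      c 0 ∣ c 1 * w 1 ^ 2 + c 2 * w 2 ^ 2 := fun w h => ⟨-w 0 ^ 2, by linear_combination h⟩
  have s1 : ∀ w : Fin 3 → ℤ, c 0 * w 0 ^ 2 + c 1 * w 1 ^ 2 + c 2 * w 2 ^ 2 = 0 →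
      c 1 ∣ c 2 * w 2 ^ 2 + c 0 * w 0 ^ 2 := fun w h => ⟨-w 1 ^ 2, by linear_combination h⟩
  have s2 : ∀ w : Fin 3 → ℤ, c 0 * w 0 ^ 2 + c 1 * w 1 ^ 2 + c 2 * w 2 ^ 2 = 0 →
      c 2 ∣ c 0 * w 0 ^ 2 + c 1 * w 1 ^ 2 := fun w h => ⟨-w 2 ^ 2, by linear_combination h⟩
  have d0 : c 0 ∣ 2 * idet x y z := by
    obtain ⟨p, hp⟩ := ckey_pair hc hx hy hb (by decide) (by decide) s0 hxy0
    obtain ⟨q, hq⟩ := ckey_pair hc hx hz hb (by decide) (by decide) s0 hxz0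
    obtain ⟨r, hr⟩ := ckey_pair hc hy hz hb (by decide) (by decide) s0 (hxy0.symm.trans hxz0)
    refine ⟨x 0 * r - y 0 * q + z 0 * p, ?_⟩
    rw [idet]; linear_combination x 0 * hr - y 0 * hq + z 0 * hp
  have d1 : c 1 ∣ 2 * idet x y z := by
    obtain ⟨p, hp⟩ := ckey_pair hc hx hy hb (by decide) (by decide) s1 hxy1
    obtain ⟨q, hq⟩ := ckey_pair hc hx hz hb (by decide) (by decide) s1 hxz1
    obtain ⟨r, hr⟩ := ckey_pair hc hy hz hb (by decide) (by decide) s1 (hxy1.symm.trans hxz1)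
    refine ⟨x 1 * r - y 1 * q + z 1 * p, ?_⟩
    rw [idet]; linear_combination x 1 * hr - y 1 * hq + z 1 * hp
  have d2 : c 2 ∣ 2 * idet x y z := by
    obtain ⟨p, hp⟩ := ckey_pair hc hx hy hb (by decide) (by decide) s2 hxy2
    obtain ⟨q, hq⟩ := ckey_pair hc hx hz hb (by decide) (by decide) s2 hxz2
    obtain ⟨r, hr⟩ := ckey_pair hc hy hz hb (by decide) (by decide) s2 (hxy2.symm.trans hxz2)
    refine ⟨x 2 * r - y 2 * q + z 2 * p, ?_⟩
    rw [idet]; linear_combination x 2 * hr - y 2 * hq + z 2 * hp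
  have c01 : IsCoprime (c 0) (c 1) := hx.cc (by decide)
  have c02 : IsCoprime (c 0) (c 2) := hx.cc (by decide)
  have c12 : IsCoprime (c 1) (c 2) := hx.cc (by decide)
  exact (c02.mul_left c12).mul_dvd (c01.mul_dvd d0 d1) d2

/-- The archimedean key. -/
noncomputable def akey (M : ℕ) (X : Fin 3 → ℝ) (i : Fin 3) (x : Fin 3 → ℤ) : ℕ :=
  ⌊(M : ℝ) * ((x i : ℝ) / x 2 / (X i / X 2))⌋₊

lemma akey_lt {M : ℕ} {c X x} (hM : 0 < M) (hX : ∀ i, 0 < X i) (hx : OnConic c X x) (i : Fin 3) :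
    akey M X i x < 2 * M := by
  have hi := hX i
  have h2 := hX 2
  have hb := ratio_bd _ _ _ _ hi h2 (hx.2.1 i) (hx.2.1 2)
  have hU : 0 < X i / X 2 := by positivity
  have hM' : (0 : ℝ) < M := by exact_mod_cast hM
  rw [akey, Nat.floor_lt (by
    have : 0 ≤ (x i : ℝ) / x 2 := by linarith
    positivity)]
  push_cast
  have : (x i : ℝ) / x 2 / (X i / X 2) < 2 := by rw [div_lt_iff₀ hU]; exact hb.2
  nlinarith

lemma akey_close {M : ℕ} {c X x y} (hM : 0 < M) (hX : ∀ i, 0 < X i) (hx : OnConic c X x)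
    (hy : OnConic c X y) (i : Fin 3) (h : akey M X i x = akey M X i y) :
    |(y i : ℝ) / y 2 - (x i : ℝ) / x 2| ≤ (1 / (M : ℝ)) * (X i / X 2) := by
  have hi := hX i
  have h2 := hX 2
  have hU : 0 < X i / X 2 := by positivity
  have hM' : (0 : ℝ) < M := by exact_mod_cast hM
  have nn : ∀ w, OnConic c X w → 0 ≤ (M : ℝ) * ((w i : ℝ) / w 2 / (X i / X 2)) := by
    intro w hw
    have hb := ratio_bd _ _ _ _ hi h2 (hw.2.1 i) (hw.2.1 2)
    have : 0 ≤ (w i : ℝ) / w 2 := by linarith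
    positivity
  have hx1 := Nat.floor_le (nn x hx)
  have hx2 := Nat.lt_floor_add_one ((M : ℝ) * ((x i : ℝ) / x 2 / (X i / X 2)))
  have hy1 := Nat.floor_le (nn y hy)
  have hy2 := Nat.lt_floor_add_one ((M : ℝ) * ((y i : ℝ) / y 2 / (X i / X 2)))
  have hab : |(M : ℝ) * ((y i : ℝ) / y 2 / (X i / X 2)) - (M : ℝ) * ((x i : ℝ) / x 2 / (X i / X 2))|
      ≤ 1 := by
    unfold akey at h
    rw [h] at hx1 hx2
    rw [abs_le]; constructor <;> linarith
  have e : (y i : ℝ) / y 2 - (x i : ℝ) / x 2 = ((M : ℝ) * ((y i : ℝ) / y 2 / (X i / X 2)) -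
      (M : ℝ) * ((x i : ℝ) / x 2 / (X i / X 2))) * ((1 / (M : ℝ)) * (X i / X 2)) := by
    generalize (y i : ℝ) / y 2 = p
    generalize (x i : ℝ) / x 2 = q
    generalize X i / X 2 = U at *
    field_simp
  rw [e, abs_mul, abs_of_pos (by positivity : 0 < (1 / (M : ℝ)) * (X i / X 2))]
  exact mul_le_of_le_one_left (by positivity) hab

lemma conic_count (c : Fin 3 → ℤ) (X : Fin 3 → ℝ) (M D : ℕ) (hM : 0 < M) (hc : ∀ i, c i ≠ 0)
    (hX : ∀ i, 0 < X i) (hD : ∀ i, (c i).natAbs.divisors.card ≤ D)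
    (hbig : 64 * (X 0 * X 1 * X 2) < (M : ℝ) ^ 3 * |((c 0 * c 1 * c 2 : ℤ) : ℝ)|)
    (s : Finset (Fin 3 → ℤ)) (hs : ∀ x ∈ s, OnConic c X x) :
    s.card ≤ 2 * (D * (D * (D * (2 * M)))) := by
  rcases s.eq_empty_or_nonempty with rfl | ⟨b, hbs⟩
  · simp
  have hb := hs b hbs
  obtain ⟨i, hi⟩ : ∃ i : Fin 3, ∀ x y z, OnConic c X x → OnConic c X y → OnConic c X z →
      akey M X i x = akey M X i y → akey M X i x = akey M X i z →
      c 0 * c 1 * c 2 ∣ 2 * idet x y z → x = y ∨ x = z ∨ y = z := by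
    have hM' : (0 : ℝ) < M := by exact_mod_cast hM
    have hcr : ∀ i, (c i : ℝ) ≠ 0 := fun i => by exact_mod_cast hc i
    have hN : 32 * (X 0 * X 1 * X 2) * (1 / (M : ℝ)) ^ 3 < |((c 0 * c 1 * c 2 : ℤ) : ℝ)| / 2 := by
      rw [div_pow, one_pow, mul_one_div, div_lt_div_iff₀ (by positivity) (by norm_num)]
      linarith
    have hcast : ∀ x, OnConic c X x →
        (c 0 : ℝ) * (x 0 : ℝ) ^ 2 + c 1 * (x 1 : ℝ) ^ 2 + c 2 * (x 2 : ℝ) ^ 2 = 0 :=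
      fun x hx => by exact_mod_cast hx.2.2.1
    have hdet : ∀ x y z, c 0 * c 1 * c 2 ∣ 2 * idet x y z →
        |(idet x y z : ℝ)| < |((c 0 * c 1 * c 2 : ℤ) : ℝ)| / 2 → (idet x y z : ℝ) = 0 := by
      intro x y z hdv hlt
      have h1 : |2 * idet x y z| < |c 0 * c 1 * c 2| := by
        have : |((2 * idet x y z : ℤ) : ℝ)| < |((c 0 * c 1 * c 2 : ℤ) : ℝ)| := by
          have e : ((2 * idet x y z : ℤ) : ℝ) = 2 * (idet x y z : ℝ) := by push_cast; ring
          rw [e, abs_mul, abs_of_pos (by norm_num : (0 : ℝ) < 2)]; linarith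
        exact_mod_cast this
      have h2 : 2 * idet x y z = 0 := Int.eq_zero_of_abs_lt_dvd ((abs_dvd _ _).mpr hdv) h1
      have : idet x y z = 0 := by omega
      exact_mod_cast this
    rcases le_total (|(c 0 : ℝ)| * X 0 ^ 2) (|(c 1 : ℝ)| * X 1 ^ 2) with hmax | hmax
    · refine ⟨0, fun x y z hx hy hz hxy hxz hdv => ?_⟩
      have := triple_real (c 0) (c 1) (c 2) (x 0) (x 1) (x 2) (y 0) (y 1) (y 2) (z 0) (z 1) (z 2)
        (X 0) (X 1) (X 2) (1 / M) _ (hcr 0) (hcr 1) (hcr 2) (hX 0) (hX 1) (hX 2)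
        (hx.2.1 0) (hx.2.1 1) (hx.2.1 2) (hy.2.1 0) (hy.2.1 1) (hy.2.1 2)
        (hz.2.1 0) (hz.2.1 1) (hz.2.1 2) (hcast x hx) (hcast y hy) (hcast z hz) hmax (by positivity)
        (akey_close hM hX hx hy 0 hxy) (akey_close hM hX hx hz 0 hxz)
        (akey_close hM hX hy hz 0 (hxy.symm.trans hxz)) hN
        (by have := hdet x y z hdv; rw [idet] at this; push_cast at this ⊢; exact this)
      rcases this with h | h | h
      · exact Or.inl (hx.eq_of_ratio hy h.1 h.2)
      · exact Or.inr (Or.inl (hx.eq_of_ratio hz h.1 h.2))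
      · exact Or.inr (Or.inr (hy.eq_of_ratio hz h.1 h.2))
    · refine ⟨1, fun x y z hx hy hz hxy hxz hdv => ?_⟩
      have := triple_real (c 1) (c 0) (c 2) (x 1) (x 0) (x 2) (y 1) (y 0) (y 2) (z 1) (z 0) (z 2)
        (X 1) (X 0) (X 2) (1 / M) _ (hcr 1) (hcr 0) (hcr 2) (hX 1) (hX 0) (hX 2)
        (hx.2.1 1) (hx.2.1 0) (hx.2.1 2) (hy.2.1 1) (hy.2.1 0) (hy.2.1 2)
        (hz.2.1 1) (hz.2.1 0) (hz.2.1 2) (by linarith [hcast x hx]) (by linarith [hcast y hy])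
        (by linarith [hcast z hz]) hmax (by positivity)
        (akey_close hM hX hx hy 1 hxy) (akey_close hM hX hx hz 1 hxz)
        (akey_close hM hX hy hz 1 (hxy.symm.trans hxz)) (by rw [mul_comm (X 1)]; exact hN)
        (by
          have := hdet x y z hdv; rw [idet] at this; push_cast at this ⊢
          intro h
          rw [← abs_neg] at h
          rw [← neg_eq_zero]
          convert this ?_ using 1
          · ring
          · convert h using 2
            ring)
      rcases this with h | h | h
      · exact Or.inl (hx.eq_of_ratio hy h.2 h.1)
      · exact Or.inr (Or.inl (hx.eq_of_ratio hz h.2 h.1))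
      · exact Or.inr (Or.inr (hy.eq_of_ratio hz h.2 h.1))
  let f : (Fin 3 → ℤ) → ℕ × ℕ × ℕ × ℕ := fun x =>
    (ckey c b x 0 1 2, ckey c b x 1 2 0, ckey c b x 2 0 1, akey M X i x)
  let t : Finset (ℕ × ℕ × ℕ × ℕ) := (c 0).natAbs.divisors ×ˢ (c 1).natAbs.divisors ×ˢ
    (c 2).natAbs.divisors ×ˢ Finset.range (2 * M)
  have hft : ∀ x ∈ s, f x ∈ t := by
    intro x hx
    have hk : ∀ i j k, ckey c b x i j k ∈ (c i).natAbs.divisors := by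
      intro i j k
      rw [Nat.mem_divisors]
      exact ⟨by rw [ckey, Int.gcd_eq_natAbs]; exact Nat.gcd_dvd_right _ _,
        Int.natAbs_ne_zero.mpr (hc i)⟩
    simp only [f, t, Finset.mem_product, Finset.mem_range]
    exact ⟨hk _ _ _, hk _ _ _, hk _ _ _, akey_lt hM hX (hs x hx) i⟩
  have hcard := Finset.card_le_mul_card_image_of_maps_to hft 2 (by
    intro k _
    by_contra! hlt
    obtain ⟨x, hx, y, hy, z, hz, hxy, hxz, hyz⟩ := Finset.two_lt_card.mp hlt
    rw [Finset.mem_filter] at hx hy hz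
    have e1 : f x = f y := hx.2.trans hy.2.symm
    have e2 : f x = f z := hx.2.trans hz.2.symm
    simp only [f, Prod.mk.injEq] at e1 e2
    have := hi x y z (hs x hx.1) (hs y hy.1) (hs z hz.1) e1.2.2.2 e2.2.2.2
      (idet_dvd hc (hs x hx.1) (hs y hy.1) (hs z hz.1) hb e1.1 e2.1 e1.2.1 e2.2.1 e1.2.2.1 e2.2.2.1)
    tauto)
  refine hcard.trans ?_
  simp only [t, Finset.card_product, Finset.card_range]
  have := hD 0
  have := hD 1
  have := hD 2
  gcongr <;> assumption

lemma S0_onConic {a : Fin 3 → ℤ} {X Y : Fin 3 → ℝ} {p : (Fin 3 → ℤ) × (Fin 3 → ℤ)}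
    (ha : ∀ i, a i ≠ 0) (hcop : ∀ i j, i ≠ j → IsCoprime (a i) (a j)) (hp : p ∈ S0 a X Y) :
    OnConic (fun i => a i * p.2 i ^ 3) X p.1 := by
  obtain ⟨hx, hy, hX, hY, heq, hg, hag, hsq⟩ := hp
  refine ⟨hx, hX, by simp only; linear_combination heq, ?_⟩
  intro i j hij
  simp only
  have hne : a i * p.2 i ^ 3 * p.1 i ^ 2 ≠ 0 :=
    mul_ne_zero (mul_ne_zero (ha i) (pow_ne_zero _ (hy i).ne')) (pow_ne_zero _ (hx i).ne')
  apply isCoprime_of_prime_dvd (fun h => hne h.1)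
  intro q hq hqi hqj
  have heq' : a 0 * p.2 0 ^ 3 * p.1 0 ^ 2 + a 1 * p.2 1 ^ 3 * p.1 1 ^ 2 +
      a 2 * p.2 2 ^ 3 * p.1 2 ^ 2 = 0 := by linear_combination heq
  have hall : ∀ k, q ∣ a k * p.2 k ^ 3 * p.1 k ^ 2 := by
    have h3 : ∀ A B C : ℤ, A + B + C = 0 → q ∣ A → q ∣ B → q ∣ C := by
      intro A B C h hA hB
      have : C = -(A + B) := by linarith
      rw [this]; exact (dvd_add hA hB).neg_right
    generalize hT : (fun k => a k * p.2 k ^ 3 * p.1 k ^ 2) = T at *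
    have hTk : ∀ k, a k * p.2 k ^ 3 * p.1 k ^ 2 = T k := fun k => by rw [← hT]
    rw [hTk] at hqi hqj
    rw [hTk, hTk, hTk] at heq'
    intro k
    rw [hTk]
    have e1 : T 0 + T 2 + T 1 = 0 := by linarith
    have e2 : T 1 + T 2 + T 0 = 0 := by linarith
    have h012 := h3 _ _ _ heq'
    have h021 := h3 _ _ _ e1
    have h120 := h3 _ _ _ e2
    fin_cases i <;> fin_cases j <;> fin_cases k <;> simp at * <;> tauto
  by_cases hqa : ∃ k, q ∣ a k
  · obtain ⟨k, hk⟩ := hqa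
    have h1 : q ∣ a 0 * a 1 * a 2 := by
      fin_cases k
      · exact (Dvd.dvd.mul_right hk _).mul_right _
      · exact (Dvd.dvd.mul_left hk _).mul_right _
      · exact Dvd.dvd.mul_left hk _
    have h2 : ¬ q ∣ p.1 0 * p.1 1 * p.1 2 * p.2 0 * p.2 1 * p.2 2 := by
      intro h2
      have := (Int.isCoprime_iff_gcd_eq_one.mpr hag).isUnit_of_dvd' h1 h2
      exact hq.not_unit this
    have h3 : ∀ l, q ∣ a l := by
      intro l
      rcases hq.dvd_or_dvd (hall l) with h | h
      · rcases hq.dvd_or_dvd h with h | h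
        · exact h
        · exfalso
          apply h2
          refine (hq.dvd_of_dvd_pow h).trans ?_
          fin_cases l
          · exact ⟨p.1 0 * p.1 1 * p.1 2 * p.2 1 * p.2 2, by simp only [Fin.zero_eta]; ring⟩
          · exact ⟨p.1 0 * p.1 1 * p.1 2 * p.2 0 * p.2 2, by simp only [Fin.mk_one]; ring⟩
          · exact ⟨p.1 0 * p.1 1 * p.1 2 * p.2 0 * p.2 1, by simp only [Fin.reduceFinMk]; ring⟩
      · exfalso
        apply h2
        refine (hq.dvd_of_dvd_pow h).trans ?_
        fin_cases l
        · exact ⟨p.1 1 * p.1 2 * p.2 0 * p.2 1 * p.2 2, by simp only [Fin.zero_eta]; ring⟩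
        · exact ⟨p.1 0 * p.1 2 * p.2 0 * p.2 1 * p.2 2, by simp only [Fin.mk_one]; ring⟩
        · exact ⟨p.1 0 * p.1 1 * p.2 0 * p.2 1 * p.2 2, by simp only [Fin.reduceFinMk]; ring⟩
    exact hq.not_unit ((hcop 0 1 (by decide)).isUnit_of_dvd' (h3 0) (h3 1))
  · push Not at hqa
    have h3 : ∀ l, q ∣ p.1 l * p.2 l := by
      intro l
      rcases hq.dvd_or_dvd (hall l) with h | h
      · rcases hq.dvd_or_dvd h with h | h
        · exact absurd h (hqa l)
        · exact (hq.dvd_of_dvd_pow h).mul_left _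
      · exact (hq.dvd_of_dvd_pow h).mul_right _
    have h4 := Int.dvd_coe_gcd (h3 0) (Int.dvd_coe_gcd (h3 1) (h3 2))
    rw [hg] at h4
    exact hq.not_unit (isUnit_of_dvd_one (by exact_mod_cast h4))

lemma S0_finite (a : Fin 3 → ℤ) (X Y : Fin 3 → ℝ) : (S0 a X Y).Finite := by
  refine Set.Finite.subset (Finset.finite_toSet
    ((Fintype.piFinset fun i => Finset.Icc 1 ⌊X i⌋) ×ˢ
      (Fintype.piFinset fun i => Finset.Icc 1 ⌊Y i⌋))) ?_
  rintro p ⟨hx, hy, hX, hY, -⟩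
  simp only [Finset.coe_product, Set.mem_prod, Finset.mem_coe, Fintype.mem_piFinset, Finset.mem_Icc]
  exact ⟨fun i => ⟨hx i, Int.le_floor.mpr (hX i).2⟩, fun i => ⟨hy i, Int.le_floor.mpr (hY i).2⟩⟩

/-- The counting bound in terms of a divisor bound `D` and a number of arcs `M`. -/
lemma S0_count (a : Fin 3 → ℤ) (X Y : Fin 3 → ℝ) (M D : ℕ) (hM : 0 < M)
    (ha : ∀ i, a i ≠ 0) (hcop : ∀ i j, i ≠ j → IsCoprime (a i) (a j))
    (hX : ∀ i, 1 ≤ X i) (hY : ∀ i, 1 ≤ Y i)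
    (hD : ∀ i, ∀ y : ℤ, 0 < y → (y : ℝ) ≤ Y i → (a i * y ^ 3).natAbs.divisors.card ≤ D)
    (hbig : 64 * (X 0 * X 1 * X 2) * 512 < ((M : ℝ) * (Y 0 * Y 1 * Y 2)) ^ 3) :
    ((S0 a X Y).ncard : ℝ) ≤ 4 * (D : ℝ) ^ 3 * ((M : ℝ) * (Y 0 * Y 1 * Y 2)) := by
  classical
  have hfin := S0_finite a X Y
  rw [Set.ncard_eq_toFinset_card _ hfin]
  have hX0 : ∀ i, 0 < X i := fun i => by linarith [hX i]
  have hY0 : ∀ i, 0 < Y i := fun i => by linarith [hY i]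
  let t : Finset (Fin 3 → ℤ) := Fintype.piFinset fun i => Finset.Icc 1 ⌊Y i⌋
  have hmaps : ∀ p ∈ hfin.toFinset, Prod.snd p ∈ t := by
    intro p hp
    obtain ⟨hx, hy, hX, hY, -⟩ := hfin.mem_toFinset.mp hp
    exact Fintype.mem_piFinset.mpr fun i => Finset.mem_Icc.mpr ⟨hy i, Int.le_floor.mpr (hY i).2⟩
  have hcard := Finset.card_le_mul_card_image_of_maps_to hmaps (2 * (D * (D * (D * (2 * M))))) (by
    intro y _
    rcases (hfin.toFinset.filter fun p => p.2 = y).eq_empty_or_nonempty with he | ⟨p0, hp0⟩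
    · rw [he]; simp
    rw [Finset.mem_filter, hfin.mem_toFinset] at hp0
    obtain ⟨⟨hx, hy, hXb, hYb, -⟩, rfl⟩ := hp0
    have hinj : Set.InjOn Prod.fst
        ((hfin.toFinset.filter fun p => p.2 = p0.2 : Finset _) : Set ((Fin 3 → ℤ) × (Fin 3 → ℤ))) := by
      intro p hp q hq hpq
      simp only [Finset.coe_filter, Set.mem_setOf_eq] at hp hq
      exact Prod.ext hpq (hp.2.trans hq.2.symm)
    rw [← Finset.card_image_of_injOn hinj]
    have hc : ∀ i, a i * p0.2 i ^ 3 ≠ 0 := fun i => mul_ne_zero (ha i) (pow_ne_zero _ (hy i).ne')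
    refine conic_count (fun i => a i * p0.2 i ^ 3) X M D hM hc hX0
      (fun i => hD i _ (hy i) (hYb i).2) ?_ _ ?_
    · have hlow : ∀ i, (Y i / 2) ^ 3 ≤ |((a i * p0.2 i ^ 3 : ℤ) : ℝ)| := by
        intro i
        have h1 : (1 : ℝ) ≤ |(a i : ℝ)| := by exact_mod_cast Int.one_le_abs (ha i)
        have h2 : (0 : ℝ) < p0.2 i := by exact_mod_cast hy i
        have h3 := hY0 i
        push_cast
        rw [abs_mul, abs_of_pos (by positivity : (0 : ℝ) < (p0.2 i : ℝ) ^ 3)]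
        calc (Y i / 2) ^ 3 = 1 * (Y i / 2) ^ 3 := by ring
          _ ≤ _ := by gcongr; exact (hYb i).1.le
      have h0 := hY0 0
      have h1 := hY0 1
      have h2 := hY0 2
      have : (Y 0 / 2) ^ 3 * (Y 1 / 2) ^ 3 * (Y 2 / 2) ^ 3 ≤
          |((a 0 * p0.2 0 ^ 3 * (a 1 * p0.2 1 ^ 3) * (a 2 * p0.2 2 ^ 3) : ℤ) : ℝ)| := by
        rw [Int.cast_mul, Int.cast_mul, abs_mul, abs_mul]
        gcongr
        exacts [hlow 0, hlow 1, hlow 2]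
      calc 64 * (X 0 * X 1 * X 2) < ((M : ℝ) * (Y 0 * Y 1 * Y 2)) ^ 3 / 512 := by linarith
        _ = (M : ℝ) ^ 3 * ((Y 0 / 2) ^ 3 * (Y 1 / 2) ^ 3 * (Y 2 / 2) ^ 3) := by ring
        _ ≤ _ := by gcongr
    · intro x hx
      rw [Finset.mem_image] at hx
      obtain ⟨p, hp, rfl⟩ := hx
      rw [Finset.mem_filter, hfin.mem_toFinset] at hp
      rw [← hp.2]
      exact S0_onConic ha hcop hp.1)
  have ht : (t.card : ℝ) ≤ Y 0 * Y 1 * Y 2 := by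
    have hone : ∀ i, ((⌊Y i⌋.toNat : ℕ) : ℝ) ≤ Y i := by
      intro i
      have h1 : (0 : ℤ) ≤ ⌊Y i⌋ := Int.floor_nonneg.mpr (hY0 i).le
      have h2 : ((⌊Y i⌋.toNat : ℕ) : ℝ) = ((⌊Y i⌋ : ℤ) : ℝ) := by
        exact_mod_cast congrArg (Int.cast : ℤ → ℝ) (Int.toNat_of_nonneg h1)
      rw [h2]; exact Int.floor_le _
    have h0 := hY0 0
    have h1 := hY0 1
    simp only [t, Fintype.card_piFinset, Int.card_Icc, Fin.prod_univ_three, add_sub_cancel_right]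
    push_cast
    gcongr
    exacts [hone 0, hone 1, hone 2]
  calc ((hfin.toFinset.card : ℕ) : ℝ) ≤ ((2 * (D * (D * (D * (2 * M)))) * t.card : ℕ) : ℝ) := by
        exact_mod_cast hcard
    _ = 4 * (D : ℝ) ^ 3 * ((M : ℝ) * t.card) := by push_cast; ring
    _ ≤ _ := by gcongr

/-- For every `ε > 0` there is a constant `C(ε)`, uniform in the `aᵢ`, `Xᵢ`, `Yᵢ`, such that
`N₀(B) ≤ C(ε)(Y₁Y₂Y₃ + (X₁X₂X₃)^{1/3})B^ε`; consequently
`N₀(B) ≤ C(ε)(Y₁Y₂Y₃ + B^{1/2})B^ε`. -/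
theorem N0_easy_bound (ε : ℝ) (hε : 0 < ε) :
    ∃ C : ℝ, 0 < C ∧ ∀ (a : Fin 3 → ℤ) (X Y : Fin 3 → ℝ) (B : ℝ),
      2 ≤ B → (∀ i, a i ≠ 0) → (∀ i, Squarefree (a i)) →
      (∀ i j, i ≠ j → IsCoprime (a i) (a j)) →
      (∀ i, 1 ≤ X i) → (∀ i, 1 ≤ Y i) →
      (∀ i, X i ^ 2 * Y i ^ 3 ≤ 32 * B / |(a i : ℝ)|) →
      ((S0 a X Y).ncard : ℝ) ≤
          C * (Y 0 * Y 1 * Y 2 + (X 0 * X 1 * X 2) ^ ((1 : ℝ) / 3)) * B ^ ε ∧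
        ((S0 a X Y).ncard : ℝ) ≤ C * (Y 0 * Y 1 * Y 2 + B ^ ((1 : ℝ) / 2)) * B ^ ε := by
  obtain ⟨C1, hC1, hdiv⟩ := divisor_bound (ε / 3) (by positivity)
  refine ⟨6 * (128 * (C1 ^ 3 * (32 : ℝ) ^ ε)), by positivity, ?_⟩
  intro a X Y B hB ha hsq hcop hX hY hXY
  have hX0 : ∀ i, 0 < X i := fun i => by linarith [hX i]
  have hY0 : ∀ i, 0 < Y i := fun i => by linarith [hY i]
  have hB0 : 0 < B := by linarith
  have hX0' := hX0 0
  have hX1' := hX0 1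
  have hX2' := hX0 2
  have hY0' := hY0 0
  have hY1' := hY0 1
  have hY2' := hY0 2
  have hapos : ∀ i, 0 < |(a i : ℝ)| := fun i => abs_pos.mpr (by exact_mod_cast ha i)
  have hone : ∀ i, (1 : ℝ) ≤ |(a i : ℝ)| := fun i => by exact_mod_cast Int.one_le_abs (ha i)
  have hXY' : ∀ i, X i ^ 2 * Y i ^ 3 * |(a i : ℝ)| ≤ 32 * B := fun i =>
    (le_div_iff₀ (hapos i)).mp (hXY i)
  set P := Y 0 * Y 1 * Y 2 with hP
  have hPpos : 0 < P := by positivity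
  set Q := (X 0 * X 1 * X 2) ^ ((1 : ℝ) / 3) with hQ
  have hQ3 : Q ^ 3 = X 0 * X 1 * X 2 := by
    rw [hQ, ← Real.rpow_natCast, ← Real.rpow_mul (by positivity)]
    norm_num
  have hQpos : 0 < Q := by positivity
  set D : ℕ := ⌊C1 * (32 * B) ^ (ε / 3)⌋₊ with hDdef
  set M : ℕ := ⌊32 * Q / P⌋₊ + 1 with hMdef
  have hM1 : 32 * Q / P < M := by rw [hMdef]; push_cast; exact Nat.lt_floor_add_one _
  have hM2 : (M : ℝ) ≤ 32 * Q / P + 1 := by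
    rw [hMdef]; push_cast
    have := Nat.floor_le (by positivity : 0 ≤ 32 * Q / P)
    linarith
  have hD : ∀ i, ∀ y : ℤ, 0 < y → (y : ℝ) ≤ Y i → (a i * y ^ 3).natAbs.divisors.card ≤ D := by
    intro i y hy hyY
    have hyr : (0 : ℝ) < y := by exact_mod_cast hy
    have hne : a i * y ^ 3 ≠ 0 := mul_ne_zero (ha i) (pow_ne_zero _ hy.ne')
    rw [hDdef]
    apply Nat.le_floor
    refine (hdiv _ (Int.natAbs_ne_zero.mpr hne)).trans ?_
    gcongr
    rw [Nat.cast_natAbs, Int.cast_abs]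
    push_cast
    rw [abs_mul, abs_of_pos (by positivity : (0 : ℝ) < (y : ℝ) ^ 3)]
    have h1 := hX i
    have h2 := hY0 i
    have h3 := hapos i
    calc |(a i : ℝ)| * (y : ℝ) ^ 3 ≤ |(a i : ℝ)| * Y i ^ 3 := by gcongr
      _ = 1 ^ 2 * Y i ^ 3 * |(a i : ℝ)| := by ring
      _ ≤ X i ^ 2 * Y i ^ 3 * |(a i : ℝ)| := by gcongr
      _ ≤ _ := hXY' i
  have hMP : 32 * Q < (M : ℝ) * P := (div_lt_iff₀ hPpos).mp hM1
  have hbig : 64 * (X 0 * X 1 * X 2) * 512 < ((M : ℝ) * P) ^ 3 := by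
    calc 64 * (X 0 * X 1 * X 2) * 512 = (32 * Q) ^ 3 := by rw [mul_pow, hQ3]; ring
      _ < _ := by gcongr
  have hcount := S0_count a X Y M D (by omega) ha hcop hX hY hD hbig
  have hD3 : (D : ℝ) ^ 3 ≤ C1 ^ 3 * (32 : ℝ) ^ ε * B ^ ε := by
    calc (D : ℝ) ^ 3 ≤ (C1 * (32 * B) ^ (ε / 3)) ^ 3 := by
          gcongr
          exact Nat.floor_le (by positivity)
      _ = C1 ^ 3 * (32 * B) ^ ε := by
          rw [mul_pow, ← Real.rpow_natCast ((32 * B) ^ (ε / 3)), ← Real.rpow_mul (by positivity)]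
          congr 2
          push_cast; ring
      _ = _ := by rw [Real.mul_rpow (by norm_num) hB0.le]; ring
  have hMP2 : (M : ℝ) * P ≤ 32 * (P + Q) := by
    calc (M : ℝ) * P ≤ (32 * Q / P + 1) * P := by gcongr
      _ = 32 * Q + P := by field_simp
      _ ≤ _ := by linarith
  have hmain : ((S0 a X Y).ncard : ℝ) ≤ 128 * (C1 ^ 3 * (32 : ℝ) ^ ε) * (P + Q) * B ^ ε := by
    calc _ ≤ 4 * (D : ℝ) ^ 3 * ((M : ℝ) * P) := hcount
      _ ≤ 4 * (C1 ^ 3 * (32 : ℝ) ^ ε * B ^ ε) * (32 * (P + Q)) := by gcongr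
      _ = _ := by ring
  have hQB : Q ≤ 6 * B ^ ((1 : ℝ) / 2) := by
    have hXi : ∀ i, X i ≤ 6 * Real.sqrt B := by
      intro i
      have h1 : X i ^ 2 ≤ 32 * B := by
        refine le_trans ?_ (hXY' i)
        have h2 : 1 ≤ Y i ^ 3 * |(a i : ℝ)| := by
          have := one_le_pow₀ (n := 3) (hY i)
          nlinarith [hone i]
        nlinarith [sq_nonneg (X i)]
      refine abs_le_of_sq_le_sq' ?_ (by positivity) |>.2
      rw [mul_pow, Real.sq_sqrt hB0.le]
      linarith
    rw [← Real.sqrt_eq_rpow]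
    refine le_of_pow_le_pow_left₀ (n := 3) (by norm_num) (by positivity) ?_
    rw [hQ3]
    calc X 0 * X 1 * X 2 ≤ (6 * Real.sqrt B) * (6 * Real.sqrt B) * (6 * Real.sqrt B) := by
          gcongr
          exacts [hXi 0, hXi 1, hXi 2]
      _ = _ := by ring
  have hKpos : 0 < 128 * (C1 ^ 3 * (32 : ℝ) ^ ε) := by positivity
  generalize 128 * (C1 ^ 3 * (32 : ℝ) ^ ε) = K at *
  have hBh : 0 < B ^ ((1 : ℝ) / 2) := by positivity
  constructor
  · refine hmain.trans ?_
    gcongr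
    linarith
  · refine hmain.trans ?_
    calc K * (P + Q) * B ^ ε ≤ K * (6 * (P + B ^ ((1 : ℝ) / 2))) * B ^ ε := by
          gcongr
          linarith
      _ = _ := by ring
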